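/- (Submatrix MacMahon Master Theorem) Let the (n'+n)×(n'+n) matrix have block form [[B, U],[V, A]]. Then Σ_{r} (1/r!) perm_β [[B, U(n^r)],[V(n^r), A(n^r,n^r)]] = perm_β(B̃) / det(I-A)^β, where B̃ = B + U(I-A)^{-1}V, the sum is over all n-tuples r of non-negative integers, and (I-A)^{-1} = Σ_{k≥0} A^k. -/

import Mathlib

open scoped Classical

noncomputable section

/-- Number of cycles of a permutation, counting fixed points as 1-cycles. -/
def cycleCount {α : Type*} [Fintype α] [DecidableEq α] (π : Equiv.Perm α) : ℕ :=
  (Finset.univ.filter fun x => π x = x).card + π.cycleType.card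

/-- The β-extended permanent of a matrix. -/
def permB {α : Type*} [Fintype α] [DecidableEq α] {R : Type*} [CommRing R]
    (β : R) (M : Matrix α α R) : R :=
  ∑ π : Equiv.Perm α, β ^ cycleCount π * ∏ i, M i (π i)

/-- `A(n^r, n^r)`: index `i` repeated `r i` times. -/
def repA {n : ℕ} {R : Type*} (A : Matrix (Fin n) (Fin n) R) (r : Fin n → ℕ) :
    Matrix ((i : Fin n) × Fin (r i)) ((i : Fin n) × Fin (r i)) R :=
  fun k l => A k.1 l.1

/-- `U(n^r)`: columns of `U` repeated according to `r`. -/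
def repU {n' n : ℕ} {R : Type*} (U : Matrix (Fin n') (Fin n) R) (r : Fin n → ℕ) :
    Matrix (Fin n') ((i : Fin n) × Fin (r i)) R :=
  fun i' k => U i' k.1

/-- `V(n^r)`: rows of `V` repeated according to `r`. -/
def repV {n' n : ℕ} {R : Type*} (V : Matrix (Fin n) (Fin n') R) (r : Fin n → ℕ) :
    Matrix ((i : Fin n) × Fin (r i)) (Fin n') R :=
  fun k j' => V k.1 j'

/-!
The repeated symbols are summed out one at a time. In the expansion of `permB β` over permutations,
a single symbol with column `u`, row `v` and diagonal entry `a`, repeated `r` times, can be cut out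
of the cycles one copy at a time. A copy forms a cycle by itself, follows another copy, or follows
a row `i` outside, which thereby turns into a row of `u vᵀ`. For a fixed set of `t` rows of the last
kind the sum over `r` is the negative binomial series of `(1 - a) ^ (-(β + t))`, and together these
turn `B` into `B + (1 - a)⁻¹ u vᵀ` with a factor `(1 - a) ^ (-β)`.

Eliminating the symbols successively gives `B̃` and `det (1 - A)`, since `1 - B̃` is a Schur
complement in `1 - M`. The condition that the rows of `A` have absolute sum less than `1` survives
each elimination, and it is insensitive to replacing `M` by the matrix of its absolute values, so
the iterated sums converge absolutely.
-/

open Equiv Finset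
open scoped Matrix Nat

section Cycles

variable {α γ : Type*}

lemma apply_eq_of_sameCycle {δ : Type*} {π : Perm α} {f : α → δ} (hf : ∀ x, f (π x) = f x)
    {x y : α} (hxy : π.SameCycle x y) : f x = f y := by
  obtain ⟨i, rfl⟩ := hxy
  induction i with
  | zero => simp
  | succ n ih => rw [add_comm, zpow_add, zpow_one, Perm.mul_apply, hf, ← ih]
  | pred n ih =>
    rw [ih, ← hf ((π ^ (-(n : ℤ) - 1)) x), ← Perm.mul_apply, ← zpow_one_add]
    simp

/-- The set of cycles of a permutation, each fixed point being a cycle, encoded as orbits. -/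
abbrev CycleClass (π : Perm α) : Type _ :=
  Quotient (Perm.SameCycle.setoid π)

lemma CycleClass.mk_apply (π : Perm α) (x : α) : (⟦π x⟧ : CycleClass π) = ⟦x⟧ :=
  Quotient.sound (Perm.sameCycle_apply_left.2 (Perm.SameCycle.refl π x))

/-- The map on cycles induced by a function that is constant along the permutation. -/
def CycleClass.lift {δ : Type*} {π : Perm α} (f : α → δ) (hf : ∀ x, f (π x) = f x) :
    CycleClass π → δ :=
  Quotient.lift f fun _ _ => apply_eq_of_sameCycle hf

variable [Fintype α] [DecidableEq α] [Fintype γ] [DecidableEq γ]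

/-- The cycle through a point, as it is counted by `cycleCount`: either a fixed point or a
nontrivial cycle factor. -/
def fixedOrCycleFactor (π : Perm α) (x : α) : {x // π x = x} ⊕ π.cycleFactorsFinset :=
  if h : π x = x then Sum.inl ⟨x, h⟩
  else Sum.inr ⟨π.cycleOf x, Perm.cycleOf_mem_cycleFactorsFinset_iff.2 (Perm.mem_support.2 h)⟩

lemma fixedOrCycleFactor_apply (π : Perm α) (x : α) :
    fixedOrCycleFactor π (π x) = fixedOrCycleFactor π x := by
  by_cases h : π x = x
  · rw [h]
  · simp [fixedOrCycleFactor, h]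

lemma sameCycle_of_fixedOrCycleFactor_eq {π : Perm α} {x y : α}
    (h : fixedOrCycleFactor π x = fixedOrCycleFactor π y) : π.SameCycle x y := by
  unfold fixedOrCycleFactor at h
  split_ifs at h with hx hy hy
  · obtain rfl : x = y := Subtype.ext_iff.1 (Sum.inl_injective h)
    exact Perm.SameCycle.refl π x
  · exact (Perm.sameCycle_iff_cycleOf_eq_of_mem_support (Perm.mem_support.2 hx)
      (Perm.mem_support.2 hy)).2 (Subtype.ext_iff.1 (Sum.inr_injective h))

lemma fixedOrCycleFactor_surjective (π : Perm α) :
    Function.Surjective (fixedOrCycleFactor π) := by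
  rintro (⟨x, hx⟩ | ⟨c, hc⟩)
  · exact ⟨x, by simp [fixedOrCycleFactor, hx]⟩
  · obtain ⟨x, hx⟩ := (Perm.mem_cycleFactorsFinset_iff.1 hc).1.nonempty_support
    have hπ : π x ≠ x := Perm.mem_support.1 (Perm.mem_cycleFactorsFinset_support_le hc hx)
    exact ⟨x, by simp [fixedOrCycleFactor, hπ, ← Perm.cycle_is_cycleOf hx hc]⟩

lemma cycleCount_eq_card_cycleClass (π : Perm α) : cycleCount π = Nat.card (CycleClass π) := by
  have hbij : Function.Bijective
      (CycleClass.lift (fixedOrCycleFactor π) (fixedOrCycleFactor_apply π)) := by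
    constructor
    · rintro ⟨x⟩ ⟨y⟩ h
      exact Quotient.sound (sameCycle_of_fixedOrCycleFactor_eq h)
    · intro s
      obtain ⟨x, hx⟩ := fixedOrCycleFactor_surjective π s
      exact ⟨⟦x⟧, hx⟩
  rw [Nat.card_congr (Equiv.ofBijective _ hbij), Nat.card_sum, cycleCount, Perm.cycleType_def]
  simp [Fintype.card_subtype]

lemma cycleCount_permCongr (e : α ≃ γ) (π : Perm α) :
    cycleCount (e.permCongr π) = cycleCount π := by
  have hmk (x : α) : (⟦e (π x)⟧ : CycleClass (e.permCongr π)) = ⟦e x⟧ := by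
    simpa using CycleClass.mk_apply (e.permCongr π) (e x)
  simp only [cycleCount_eq_card_cycleClass]
  refine Nat.card_congr
    { toFun := CycleClass.lift (fun y => ⟦e.symm y⟧) fun y => ?_
      invFun := CycleClass.lift (fun x => ⟦e x⟧) hmk
      left_inv := ?_
      right_inv := ?_ }
  · simp [CycleClass.mk_apply]
  · rintro ⟨y⟩
    exact congrArg (Quotient.mk _) (e.apply_symm_apply y)
  · rintro ⟨x⟩
    exact congrArg (Quotient.mk _) (e.symm_apply_apply x)

lemma cycleCount_decomposeOption_symm_none (σ : Perm α) :
    cycleCount (Perm.decomposeOption.symm (none, σ)) = cycleCount σ + 1 := by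
  simp only [cycleCount_eq_card_cycleClass]
  set π := Perm.decomposeOption.symm (none, σ) with hπ
  have hsome (x : α) : π (some x) = some (σ x) := by simp [hπ]
  rw [← Finite.card_option]
  refine Nat.card_congr
    { toFun := CycleClass.lift (Option.map fun x => (⟦x⟧ : CycleClass σ)) ?_
      invFun := fun q => q.elim ⟦none⟧ (CycleClass.lift (fun x => ⟦some x⟧) fun x => ?_)
      left_inv := ?_
      right_inv := ?_ }
  · rintro (_ | x)
    · simp [hπ]
    · simp [hsome, CycleClass.mk_apply]
  · rw [← hsome, CycleClass.mk_apply]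
  · rintro ⟨_ | x⟩ <;> rfl
  · rintro (_ | q)
    · rfl
    · obtain ⟨x⟩ := q
      rfl

lemma cycleCount_decomposeOption_symm_some (σ : Perm α) (i : α) :
    cycleCount (Perm.decomposeOption.symm (some i, σ)) = cycleCount σ := by
  simp only [cycleCount_eq_card_cycleClass]
  set π := Perm.decomposeOption.symm (some i, σ) with hπ
  have hnone : π none = some i := by simp [hπ]
  have hsome (x : α) : π (some x) = if σ x = i then none else some (σ x) := by
    split_ifs with h <;> simp [hπ, h, Equiv.swap_apply_def]
  have hi : (⟦some i⟧ : CycleClass π) = ⟦none⟧ := hnone ▸ CycleClass.mk_apply π none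
  refine Nat.card_congr
    { toFun := CycleClass.lift (fun z => ⟦z.getD i⟧) ?_
      invFun := CycleClass.lift (fun x => ⟦some x⟧) fun x => ?_
      left_inv := ?_
      right_inv := ?_ }
  · rintro (_ | x)
    · simp [hnone]
    · rw [hsome, Option.getD_some, ← CycleClass.mk_apply σ x]
      split_ifs with h <;> simp [h]
  · rw [← CycleClass.mk_apply π (some x), hsome]
    split_ifs with h
    · rw [h, hi]
    · rfl
  · rintro ⟨_ | x⟩
    · exact hi
    · rfl
  · rintro ⟨x⟩
    rfl

end Cycles

section Permanent

variable {α γ R : Type*} [Fintype α] [DecidableEq α] [Fintype γ] [DecidableEq γ] [CommRing R]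

lemma permB_submatrix_equiv (β : R) (e : α ≃ γ) (M : Matrix γ γ R) :
    permB β (M.submatrix e e) = permB β M := by
  unfold permB
  refine Fintype.sum_equiv e.permCongr _ _ fun π => ?_
  rw [cycleCount_permCongr, ← e.prod_comp fun i => M i (e.permCongr π i)]
  simp

lemma permB_updateRow_smul_self (β : R) (M : Matrix α α R) (i : α) (c : R) :
    permB β (M.updateRow i (c • M i)) = c * permB β M := by
  simp only [permB, mul_sum]
  refine sum_congr rfl fun π _ => ?_
  have herase : ∏ x ∈ univ.erase i, M.updateRow i (c • M i) x (π x) =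
      ∏ x ∈ univ.erase i, M x (π x) :=
    prod_congr rfl fun x hx => by rw [Matrix.updateRow_ne (ne_of_mem_erase hx)]
  rw [← mul_prod_erase _ _ (mem_univ i), herase, ← mul_prod_erase _ _ (mem_univ i)]
  simp only [Matrix.updateRow_self, Pi.smul_apply, smul_eq_mul]
  ring

/-- `M` with index `none` deleted, and row `i` replaced by the weights of the two-step paths from
`i` through `none`. -/
def bypassNone (M : Matrix (Option α) (Option α) R) (i : α) : Matrix α α R :=
  (M.submatrix some some).updateRow i (M (some i) none • fun j => M none (some j))

lemma prod_decomposeOption_symm_none (M : Matrix (Option α) (Option α) R) (σ : Perm α) :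
    ∏ x, M x (Perm.decomposeOption.symm (none, σ) x) =
      M none none * ∏ x, M (some x) (some (σ x)) := by
  rw [Fintype.prod_option]
  simp

lemma prod_decomposeOption_symm_some (M : Matrix (Option α) (Option α) R) (σ : Perm α) (i : α) :
    ∏ x, M x (Perm.decomposeOption.symm (some (σ i), σ) x) =
      ∏ x, bypassNone M i x (σ x) := by
  have herase : ∏ x ∈ univ.erase i,
      M (some x) (Perm.decomposeOption.symm (some (σ i), σ) (some x)) =
      ∏ x ∈ univ.erase i, bypassNone M i x (σ x) := by
    refine prod_congr rfl fun x hx => ?_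
    have hσ : σ x ≠ σ i := σ.injective.ne (ne_of_mem_erase hx)
    simp [bypassNone, Matrix.updateRow_ne (ne_of_mem_erase hx), Equiv.swap_apply_def, hσ]
  rw [Fintype.prod_option, ← mul_prod_erase _ _ (mem_univ i), herase,
    ← mul_prod_erase _ (fun x => bypassNone M i x (σ x)) (mem_univ i)]
  simp only [bypassNone, Perm.decomposeOption_symm_apply, Perm.mul_apply, optionCongr_apply,
    Option.map_none, Option.map_some, swap_apply_left, swap_apply_right, Matrix.updateRow_self,
    Pi.smul_apply, smul_eq_mul]
  ring

/-- Either `none` is a fixed point, or it is cut out of its cycle. -/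
lemma permB_option (β : R) (M : Matrix (Option α) (Option α) R) :
    permB β M = β * M none none * permB β (M.submatrix some some) +
      ∑ i, permB β (bypassNone M i) := by
  have hdecompose : permB β M = ∑ σ : Perm α, ∑ i : Option α,
      β ^ cycleCount (Perm.decomposeOption.symm (i, σ)) *
        ∏ x, M x (Perm.decomposeOption.symm (i, σ) x) := by
    rw [← Fintype.sum_prod_type_right']
    exact (Perm.decomposeOption.symm.sum_comp _).symm
  rw [hdecompose]
  simp only [Fintype.sum_option, sum_add_distrib, cycleCount_decomposeOption_symm_none,
    cycleCount_decomposeOption_symm_some, prod_decomposeOption_symm_none]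
  congr 1
  · rw [permB, mul_sum]
    refine sum_congr rfl fun σ _ => ?_
    simp only [Matrix.submatrix_apply]
    ring
  · simp only [permB]
    rw [sum_comm (γ := α)]
    refine sum_congr rfl fun σ _ => ?_
    rw [← Equiv.sum_comp σ]
    simp only [prod_decomposeOption_symm_some]

end Permanent

section OneSymbol

variable {γ R : Type*}

/-- The block matrix `[[B, u ⋯ u], [v; ⋯; v, a ⋯ a]]`, in which a single symbol with column `u`,
row `v` and diagonal entry `a` is repeated `r` times. -/
def constBorder (B : Matrix γ γ R) (u v : γ → R) (a : R) (r : ℕ) :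
    Matrix (γ ⊕ Fin r) (γ ⊕ Fin r) R :=
  Matrix.fromBlocks B (Matrix.replicateCol (Fin r) u) (Matrix.replicateRow (Fin r) v)
    (Matrix.of fun _ _ => a)

/-- The equivalence identifying `none` with the first of `r + 1` copies of a symbol. -/
def optionSumFinEquiv (γ : Type*) (r : ℕ) : Option (γ ⊕ Fin r) ≃ γ ⊕ Fin (r + 1) :=
  (optionEquivSumPUnit _).trans <| (sumAssoc γ (Fin r) Unit).trans <|
    sumCongr (Equiv.refl γ) ((optionEquivSumPUnit (Fin r)).symm.trans (finSuccEquiv r).symm)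

lemma constBorder_submatrix_some (B : Matrix γ γ R) (u v : γ → R) (a : R) (r : ℕ) :
    ((constBorder B u v a (r + 1)).submatrix (optionSumFinEquiv γ r)
      (optionSumFinEquiv γ r)).submatrix some some = constBorder B u v a r := by
  ext (x | x) (y | y) <;> rfl

variable [DecidableEq γ] [CommRing R]

lemma bypassNone_constBorder_inl (B : Matrix γ γ R) (u v : γ → R) (a : R) (r : ℕ) (i : γ) :
    bypassNone ((constBorder B u v a (r + 1)).submatrix (optionSumFinEquiv γ r)
      (optionSumFinEquiv γ r)) (Sum.inl i) =
    constBorder (B.updateRow i (u i • v)) (Function.update u i (u i * a)) v a r := by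
  rw [bypassNone, constBorder_submatrix_some]
  ext x y
  by_cases hx : x = Sum.inl i
  · subst hx
    rw [Matrix.updateRow_self]
    rcases y with y | y
    · simp [constBorder, optionSumFinEquiv]
    · simp [constBorder, optionSumFinEquiv]
  · rw [Matrix.updateRow_ne hx]
    rcases x with x | x
    · have hx : x ≠ i := fun h => hx (congrArg _ h)
      rcases y with y | y <;> simp [constBorder, hx]
    · rcases y with y | y <;> rfl

lemma bypassNone_constBorder_inr (B : Matrix γ γ R) (u v : γ → R) (a : R) (r : ℕ) (k : Fin r) :
    bypassNone ((constBorder B u v a (r + 1)).submatrix (optionSumFinEquiv γ r)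
      (optionSumFinEquiv γ r)) (Sum.inr k) =
    (constBorder B u v a r).updateRow (Sum.inr k) (a • constBorder B u v a r (Sum.inr k)) := by
  rw [bypassNone, constBorder_submatrix_some]
  congr 1
  ext (y | y) <;> rfl

/-- The matrix `B` with the rows indexed by `T` replaced by those of the rank one matrix `u vᵀ`. -/
def rankOneRows (B : Matrix γ γ R) (u v : γ → R) (T : Finset γ) : Matrix γ γ R :=
  Matrix.of fun i j => if i ∈ T then u i * v j else B i j

lemma rankOneRows_update_of_mem (B : Matrix γ γ R) (u v : γ → R) (a : R) {i : γ} {T : Finset γ}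
    (hi : i ∈ T) :
    rankOneRows (B.updateRow i (u i • v)) (Function.update u i (u i * a)) v T =
      (rankOneRows B u v T).updateRow i (a • rankOneRows B u v T i) := by
  ext x y
  by_cases hx : x = i
  · subst hx
    simp only [rankOneRows, Matrix.of_apply, hi, ↓reduceIte, Function.update_self,
      Matrix.updateRow_self, Pi.smul_apply, smul_eq_mul]
    ring
  · by_cases hT : x ∈ T <;> simp [rankOneRows, hx, hT]

lemma rankOneRows_update_of_notMem (B : Matrix γ γ R) (u v : γ → R) (a : R) {i : γ}
    {T : Finset γ} (hi : i ∉ T) :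
    rankOneRows (B.updateRow i (u i • v)) (Function.update u i (u i * a)) v T =
      rankOneRows B u v (insert i T) := by
  ext x y
  by_cases hx : x = i
  · subst hx
    simp [rankOneRows, hi]
  · by_cases hT : x ∈ T <;> simp [rankOneRows, hx, hT]

variable [Fintype γ]

lemma permB_constBorder_zero (β : R) (B : Matrix γ γ R) (u v : γ → R) (a : R) :
    permB β (constBorder B u v a 0) = permB β B := by
  rw [← permB_submatrix_equiv β (Equiv.sumEmpty γ (Fin 0)).symm]
  rfl

lemma permB_constBorder_succ (β : R) (B : Matrix γ γ R) (u v : γ → R) (a : R) (r : ℕ) :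
    permB β (constBorder B u v a (r + 1)) = (β + r) * a * permB β (constBorder B u v a r) +
      ∑ i, permB β
        (constBorder (B.updateRow i (u i • v)) (Function.update u i (u i * a)) v a r) := by
  rw [← permB_submatrix_equiv β (optionSumFinEquiv γ r), permB_option, Fintype.sum_sum_type]
  simp only [constBorder_submatrix_some, bypassNone_constBorder_inl, bypassNone_constBorder_inr,
    permB_updateRow_smul_self, sum_const, card_univ, Fintype.card_fin, nsmul_eq_mul]
  have hnone : (constBorder B u v a (r + 1)).submatrix (optionSumFinEquiv γ r)
      (optionSumFinEquiv γ r) none none = a := rfl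
  rw [hnone]
  ring

lemma permB_add_smul_vecMulVec (β : R) (B : Matrix γ γ R) (u v : γ → R) (s : R) :
    permB β (B + s • Matrix.vecMulVec u v) =
      ∑ T : Finset γ, s ^ #T * permB β (rankOneRows B u v T) := by
  simp only [permB, mul_sum]
  rw [sum_comm]
  refine sum_congr rfl fun π _ => ?_
  have hentry (i : γ) : (B + s • Matrix.vecMulVec u v) i (π i) =
      s * (u i * v (π i)) + B i (π i) := add_comm _ _
  simp only [hentry, prod_add, mul_sum, powerset_univ, prod_mul_distrib, prod_const]
  refine sum_congr rfl fun T _ => ?_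
  have hrows : ∏ i, rankOneRows B u v T i (π i) =
      (∏ i ∈ T, u i * v (π i)) * ∏ i ∈ univ \ T, B i (π i) := by
    simp only [rankOneRows, Matrix.of_apply, prod_ite, filter_mem_eq_inter, univ_inter,
      filter_notMem_eq_sdiff]
  rw [hrows, prod_mul_distrib]
  ring

lemma sum_filter_notMem_eq_sum_filter_mem_erase {M : Type*} [AddCommMonoid M] (i : γ)
    (f : Finset γ → Finset γ → M) :
    ∑ T with i ∉ T, f T (insert i T) = ∑ T with i ∈ T, f (T.erase i) T := by
  refine sum_nbij' (fun T => insert i T) (fun T => T.erase i) ?_ ?_ ?_ ?_ ?_ <;>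
    simp +contextual

/-- The coefficient with which `t` rank one rows enter the expansion of `permB β` of a
`constBorder` with `r` repetitions. Divided by `r !`, it is the coefficient of `z ^ r` in
`(z / (1 - z * a)) ^ t * (1 - z * a) ^ (-β)`. -/
def rankOneCoeff (β a : R) (t r : ℕ) : R :=
  r.descFactorial t * (ascPochhammer R (r - t)).eval (β + t) * a ^ (r - t)

lemma rankOneCoeff_succ (β a : R) (t r : ℕ) :
    rankOneCoeff β a t (r + 1) = (β + r) * a * rankOneCoeff β a t r +
      t * (a * rankOneCoeff β a t r + rankOneCoeff β a (t - 1) r) := by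
  unfold rankOneCoeff
  rcases t with _ | s
  · simp only [Nat.descFactorial_zero, Nat.cast_one, Nat.cast_zero, add_zero, tsub_zero,
      ascPochhammer_succ_eval, one_mul, zero_tsub, zero_mul]
    ring
  rcases lt_trichotomy r s with h | rfl | h
  · simp [Nat.descFactorial_of_lt, h, h.le]
  · simpa using congrArg (Nat.cast : ℕ → R) (Nat.succ_descFactorial_succ r r)
  · obtain ⟨j, rfl⟩ := Nat.exists_eq_add_of_lt h
    have hsub₁ : s + j + 1 + 1 - (s + 1) = j + 1 := by omega
    have hsub₂ : s + j + 1 - (s + 1) = j := by omega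
    have hsub₃ : s + j + 1 - s = j + 1 := by omega
    have hdesc₁ : (s + j + 1 + 1).descFactorial (s + 1) =
        (s + j + 1 + 1) * (s + j + 1).descFactorial s := Nat.succ_descFactorial_succ _ _
    have hdesc₂ : (s + j + 1).descFactorial (s + 1) = (j + 1) * (s + j + 1).descFactorial s := by
      rw [Nat.descFactorial_succ, hsub₃]
    have hasc : (ascPochhammer R (j + 1)).eval (β + s) =
        (β + s) * (ascPochhammer R j).eval (β + (s + 1)) := by
      rw [ascPochhammer_succ_left]
      simp [add_assoc]
    simp only [hsub₁, hsub₂, hsub₃, hdesc₁, hdesc₂, Nat.add_sub_cancel, hasc,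
      ascPochhammer_succ_eval, pow_succ]
    push_cast
    ring

lemma sum_mul_permB_rankOneRows_update (β : R) (B : Matrix γ γ R) (u v : γ → R) (a : R) (i : γ)
    (c : ℕ → R) :
    ∑ T, c #T * permB β
        (rankOneRows (B.updateRow i (u i • v)) (Function.update u i (u i * a)) v T) =
      ∑ T with i ∈ T, (a * c #T + c (#T - 1)) * permB β (rankOneRows B u v T) := by
  rw [← sum_filter_add_sum_filter_not univ (i ∈ ·)]
  simp only [add_mul, sum_add_distrib]
  congr 1
  · refine sum_congr rfl fun T hT => ?_
    rw [rankOneRows_update_of_mem B u v a (mem_filter.1 hT).2, permB_updateRow_smul_self]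
    ring
  · calc ∑ T with i ∉ T, c #T * permB β
          (rankOneRows (B.updateRow i (u i • v)) (Function.update u i (u i * a)) v T)
        = ∑ T with i ∉ T, c #T * permB β (rankOneRows B u v (insert i T)) :=
          sum_congr rfl fun T hT => by
            rw [rankOneRows_update_of_notMem B u v a (mem_filter.1 hT).2]
      _ = ∑ T with i ∈ T, c #(T.erase i) * permB β (rankOneRows B u v T) :=
          sum_filter_notMem_eq_sum_filter_mem_erase i
            fun T T' => c #T * permB β (rankOneRows B u v T')
      _ = ∑ T with i ∈ T, c (#T - 1) * permB β (rankOneRows B u v T) :=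
          sum_congr rfl fun T hT => by rw [card_erase_of_mem (mem_filter.1 hT).2]

/-- The rows that meet a repeated symbol in a cycle form the set `T`. -/
lemma permB_constBorder (β : R) (B : Matrix γ γ R) (u v : γ → R) (a : R) (r : ℕ) :
    permB β (constBorder B u v a r) =
      ∑ T : Finset γ, rankOneCoeff β a #T r * permB β (rankOneRows B u v T) := by
  induction r generalizing B u with
  | zero =>
    rw [permB_constBorder_zero, Fintype.sum_eq_single ∅ fun T hT => ?_]
    · have hB : rankOneRows B u v ∅ = B := by ext; simp [rankOneRows]
      simp [rankOneCoeff, hB]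
    · simp [rankOneCoeff, Nat.descFactorial_of_lt (card_pos.2 (nonempty_iff_ne_empty.2 hT))]
  | succ r ih =>
    have hrow (i : γ) := sum_mul_permB_rankOneRows_update β B u v a i (rankOneCoeff β a · r)
    simp only [permB_constBorder_succ, ih, hrow]
    simp only [sum_filter]
    rw [sum_comm, mul_sum, ← sum_add_distrib]
    refine sum_congr rfl fun T _ => ?_
    simp only [sum_ite_mem, univ_inter, sum_const, nsmul_eq_mul, rankOneCoeff_succ]
    ring

end OneSymbol

section Series

lemma hasSum_multichoose_mul_pow (b : ℝ) {a : ℝ} (ha : |a| < 1) :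
    HasSum (fun j : ℕ => Ring.multichoose b j * a ^ j) ((1 - a) ^ (-b)) := by
  have hseries := (Real.one_div_one_sub_rpow_hasFPowerSeriesOnBall_zero b).hasSum (y := a)
    (by simpa [enorm_eq_nnnorm, ← NNReal.coe_lt_one] using ha)
  rw [Real.rpow_neg (by linarith [lt_of_abs_lt ha])]
  simpa [Ring.multichoose_eq, mul_comm] using hseries

lemma inv_factorial_mul_rankOneCoeff (β a : ℝ) (t j : ℕ) :
    ((j + t)! : ℝ)⁻¹ * rankOneCoeff β a t (j + t) = Ring.multichoose (β + t) j * a ^ j := by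
  have hasc := Ring.factorial_nsmul_multichoose_eq_ascPochhammer (β + t) j
  rw [Polynomial.ascPochhammer_smeval_eq_eval, nsmul_eq_mul] at hasc
  have hdesc : ((j + t)! : ℝ) = j ! * (j + t).descFactorial t := by
    rw [← Nat.factorial_mul_descFactorial (Nat.le_add_left t j), Nat.add_sub_cancel, Nat.cast_mul]
  have hfact : ((j + t)! : ℝ) ≠ 0 := Nat.cast_ne_zero.2 (Nat.factorial_ne_zero _)
  rw [rankOneCoeff, Nat.add_sub_cancel, ← hasc, inv_mul_eq_iff_eq_mul₀ hfact, hdesc]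
  ring

lemma hasSum_rankOneCoeff (β : ℝ) {a : ℝ} (t : ℕ) (ha : |a| < 1) :
    HasSum (fun r : ℕ => (r ! : ℝ)⁻¹ * rankOneCoeff β a t r) ((1 - a) ^ (-(β + t))) := by
  rw [← (add_left_injective t).hasSum_iff fun r hr => ?_]
  · simpa only [Function.comp_def, inv_factorial_mul_rankOneCoeff] using
      hasSum_multichoose_mul_pow (β + t) ha
  · have hrt : r < t := not_le.1 fun h => hr ⟨r - t, Nat.sub_add_cancel h⟩
    simp [rankOneCoeff, Nat.descFactorial_of_lt hrt]

lemma hasSum_permB_constBorder {γ : Type*} [Fintype γ] [DecidableEq γ] (β : ℝ)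
    (B : Matrix γ γ ℝ) (u v : γ → ℝ) {a : ℝ} (ha : |a| < 1) :
    HasSum (fun r : ℕ => (r ! : ℝ)⁻¹ * permB β (constBorder B u v a r))
      (permB β (B + (1 - a)⁻¹ • Matrix.vecMulVec u v) * (1 - a) ^ (-β)) := by
  have hpos : 0 < 1 - a := by linarith [lt_of_abs_lt ha]
  simp only [permB_constBorder, permB_add_smul_vecMulVec, mul_sum, sum_mul, ← mul_assoc]
  refine hasSum_sum fun T _ => ?_
  convert! (hasSum_rankOneCoeff β #T ha).mul_right (permB β (rankOneRows B u v T)) using 1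
  rw [neg_add, Real.rpow_add hpos, Real.rpow_neg hpos.le (#T : ℝ), Real.rpow_natCast, inv_pow]
  ring

end Series

section Elimination

variable {γ δ ι κ R : Type*} [DecidableEq ι] [DecidableEq κ] [CommRing R]

lemma one_sub_eq_fromBlocks (A : Matrix (ι ⊕ κ) (ι ⊕ κ) R) :
    1 - A = Matrix.fromBlocks (1 - A.toBlocks₁₁) (-A.toBlocks₁₂) (-A.toBlocks₂₁)
      (1 - A.toBlocks₂₂) := by
  rw [← Matrix.fromBlocks_toBlocks (1 - A)]
  congr <;> ext <;>
    simp [Matrix.toBlocks₁₁, Matrix.toBlocks₁₂, Matrix.toBlocks₂₁, Matrix.toBlocks₂₂,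
      Matrix.one_apply]

variable [Fintype ι] [Fintype κ]

/-- `B + U (1 - A)⁻¹ V`, written `B̃` in the theorem, for a block matrix `M = [[B, U], [V, A]]`;
`1 - eliminate M` is the Schur complement of the block `1 - A` in `1 - M`. -/
def eliminate (M : Matrix (γ ⊕ ι) (γ ⊕ ι) R) : Matrix γ γ R :=
  M.toBlocks₁₁ + M.toBlocks₁₂ * (1 - M.toBlocks₂₂)⁻¹ * M.toBlocks₂₁

lemma eliminate_submatrix (M : Matrix (γ ⊕ ι) (γ ⊕ ι) R) (f : δ → γ) (e : κ ≃ ι) :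
    eliminate (M.submatrix (Sum.map f e) (Sum.map f e)) = (eliminate M).submatrix f f := by
  have hinv : (1 - (M.submatrix (Sum.map f e) (Sum.map f e)).toBlocks₂₂)⁻¹ =
      ((1 - M.toBlocks₂₂)⁻¹).submatrix e e := by
    rw [← Matrix.inv_submatrix_equiv, Matrix.submatrix_sub, Pi.sub_apply, Pi.sub_apply,
      Matrix.submatrix_one_equiv]
    rfl
  rw [eliminate, hinv, eliminate, Matrix.submatrix_add, Pi.add_apply, Pi.add_apply,
    Matrix.submatrix_mul _ _ f e f e.bijective, Matrix.submatrix_mul _ _ f e e e.bijective]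
  rfl

lemma eliminate_unit_apply {K : Type*} [Field K] (M : Matrix (γ ⊕ Unit) (γ ⊕ Unit) K) (i j : γ) :
    eliminate M i j = M (Sum.inl i) (Sum.inl j) + (1 - M (Sum.inr ()) (Sum.inr ()))⁻¹ *
      (M (Sum.inl i) (Sum.inr ()) * M (Sum.inr ()) (Sum.inl j)) := by
  simp only [eliminate, Matrix.inv_subsingleton, Ring.inverse_eq_inv', Matrix.add_apply,
    Matrix.mul_apply, Fintype.sum_unique, Matrix.diagonal_apply_eq, Matrix.sub_apply,
    Matrix.one_apply_eq, Matrix.toBlocks₁₁, Matrix.toBlocks₁₂, Matrix.toBlocks₂₁,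
    Matrix.toBlocks₂₂, Matrix.of_apply]
  ring

lemma det_one_sub_eq_mul (A : Matrix (ι ⊕ κ) (ι ⊕ κ) R) (hκ : IsUnit (1 - A.toBlocks₂₂).det) :
    (1 - A).det = (1 - A.toBlocks₂₂).det * (1 - eliminate A).det := by
  let _ := (1 - A.toBlocks₂₂).invertibleOfIsUnitDet hκ
  rw [one_sub_eq_fromBlocks, Matrix.det_fromBlocks₂₂, Matrix.invOf_eq_nonsing_inv, eliminate]
  congr 2
  simp [sub_sub]

lemma inv_one_sub_eq_fromBlocks (A : Matrix (ι ⊕ κ) (ι ⊕ κ) R)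
    (hκ : IsUnit (1 - A.toBlocks₂₂).det) (hι : IsUnit (1 - eliminate A).det) :
    (1 - A)⁻¹ = Matrix.fromBlocks (1 - eliminate A)⁻¹
      ((1 - eliminate A)⁻¹ * A.toBlocks₁₂ * (1 - A.toBlocks₂₂)⁻¹)
      ((1 - A.toBlocks₂₂)⁻¹ * A.toBlocks₂₁ * (1 - eliminate A)⁻¹)
      ((1 - A.toBlocks₂₂)⁻¹ + (1 - A.toBlocks₂₂)⁻¹ * A.toBlocks₂₁ * (1 - eliminate A)⁻¹ *
        A.toBlocks₁₂ * (1 - A.toBlocks₂₂)⁻¹) := by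
  let _ := (1 - A.toBlocks₂₂).invertibleOfIsUnitDet hκ
  have hschur : 1 - A.toBlocks₁₁ - -A.toBlocks₁₂ * ⅟(1 - A.toBlocks₂₂) * -A.toBlocks₂₁ =
      1 - eliminate A := by
    simp [eliminate, Matrix.invOf_eq_nonsing_inv, sub_sub]
  let _ : Invertible
      (1 - A.toBlocks₁₁ - -A.toBlocks₁₂ * ⅟(1 - A.toBlocks₂₂) * -A.toBlocks₂₁) :=
    Matrix.invertibleOfIsUnitDet _ (by rwa [hschur])
  let _ := Matrix.fromBlocks₂₂Invertible (1 - A.toBlocks₁₁) (-A.toBlocks₁₂) (-A.toBlocks₂₁)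
    (1 - A.toBlocks₂₂)
  rw [one_sub_eq_fromBlocks, ← Matrix.invOf_eq_nonsing_inv, Matrix.invOf_fromBlocks₂₂_eq]
  simp [Matrix.invOf_eq_nonsing_inv, eliminate, sub_sub]

/-- The matrix `[[B', U'], [V', A']]` left after eliminating only the last block `κ` of symbols. -/
def eliminateLast (M : Matrix (γ ⊕ (ι ⊕ κ)) (γ ⊕ (ι ⊕ κ)) R) : Matrix (γ ⊕ ι) (γ ⊕ ι) R :=
  eliminate (M.submatrix (sumAssoc γ ι κ) (sumAssoc γ ι κ))

lemma eliminate_eliminateLast (M : Matrix (γ ⊕ (ι ⊕ κ)) (γ ⊕ (ι ⊕ κ)) R)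
    (hκ : IsUnit (1 - M.toBlocks₂₂.toBlocks₂₂).det)
    (hι : IsUnit (1 - eliminate M.toBlocks₂₂).det) :
    eliminate (eliminateLast M) = eliminate M := by
  have hU : M.toBlocks₁₂ = Matrix.fromCols M.toBlocks₁₂.toCols₁ M.toBlocks₁₂.toCols₂ :=
    (Matrix.fromCols_toCols _).symm
  have hV : M.toBlocks₂₁ = Matrix.fromRows M.toBlocks₂₁.toRows₁ M.toBlocks₂₁.toRows₂ :=
    (Matrix.fromRows_toRows _).symm
  have hblocks : eliminateLast M =
      let D := (1 - M.toBlocks₂₂.toBlocks₂₂)⁻¹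
      Matrix.fromBlocks
        (M.toBlocks₁₁ + M.toBlocks₁₂.toCols₂ * D * M.toBlocks₂₁.toRows₂)
        (M.toBlocks₁₂.toCols₁ + M.toBlocks₁₂.toCols₂ * D * M.toBlocks₂₂.toBlocks₂₁)
        (M.toBlocks₂₁.toRows₁ + M.toBlocks₂₂.toBlocks₁₂ * D * M.toBlocks₂₁.toRows₂)
        (eliminate M.toBlocks₂₂) := by
    ext (i | i) (j | j) <;> rfl
  rw [hblocks, eliminate, eliminate.eq_def M, inv_one_sub_eq_fromBlocks _ hκ hι, hU, hV,
    Matrix.fromCols_mul_fromBlocks, Matrix.fromCols_mul_fromRows]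
  simp only [Matrix.toBlocks_fromBlocks₁₁, Matrix.toBlocks_fromBlocks₁₂,
    Matrix.toBlocks_fromBlocks₂₁, Matrix.toBlocks_fromBlocks₂₂, Matrix.toCols₁_fromCols,
    Matrix.toCols₂_fromCols, Matrix.toRows₁_fromRows, Matrix.toRows₂_fromRows, Matrix.mul_add,
    Matrix.add_mul, Matrix.mul_assoc]
  abel

end Elimination

section RowSums

lemma abs_apply_lt_one_of_row_sum_lt_one {ι : Type*} [Fintype ι] {A : Matrix ι ι ℝ}
    (hA : ∀ i, ∑ j, |A i j| < 1) (i j : ι) : |A i j| < 1 :=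
  (single_le_sum (fun k _ => abs_nonneg (A i k)) (mem_univ j)).trans_lt (hA i)

/-- A row loses its entry `|a i|` in the eliminated column, and gains at most as much, since
the remaining part of the eliminated row has absolute sum less than `1 - |a|`. -/
lemma row_sum_eliminate_lt_one {ι : Type*} [Fintype ι] {A : Matrix (ι ⊕ Unit) (ι ⊕ Unit) ℝ}
    (hA : ∀ i, ∑ j, |A i j| < 1) (i : ι) : ∑ j, |eliminate A i j| < 1 := by
  set a := A (Sum.inr ()) (Sum.inr ())
  set c := A (Sum.inl i) (Sum.inr ())
  have hrow := hA (Sum.inl i)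
  have hpivot := hA (Sum.inr ())
  simp only [Fintype.sum_sum_type, Fintype.sum_unique, PUnit.default_eq_unit] at hrow hpivot
  set q := ∑ j, |A (Sum.inr ()) (Sum.inl j)|
  have hinv : |(1 - a)⁻¹| * q ≤ 1 := by
    have ha : q ≤ |1 - a| := by linarith [le_abs_self a, le_abs_self (1 - a)]
    rw [abs_inv]
    exact inv_mul_le_one_of_le₀ ha (abs_nonneg _)
  calc ∑ j, |eliminate A i j|
      ≤ ∑ j, (|A (Sum.inl i) (Sum.inl j)| +
          |(1 - a)⁻¹| * (|c| * |A (Sum.inr ()) (Sum.inl j)|)) :=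
        sum_le_sum fun j _ => by
          rw [eliminate_unit_apply, ← abs_mul c, ← abs_mul]
          exact abs_add_le _ _
    _ = ∑ j, |A (Sum.inl i) (Sum.inl j)| + |c| * (|(1 - a)⁻¹| * q) := by
        rw [sum_add_distrib, ← mul_sum, ← mul_sum]
        ring
    _ ≤ ∑ j, |A (Sum.inl i) (Sum.inl j)| + |c| := by
        gcongr
        exact mul_le_of_le_one_right (abs_nonneg c) hinv
    _ < 1 := hrow

/-- By Gershgorin's theorem `det (1 - t • A)` does not vanish for `t ∈ [0, 1]`, and it is `1` at
`t = 0`. -/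
lemma det_one_sub_pos {ι : Type*} [Fintype ι] [DecidableEq ι] {A : Matrix ι ι ℝ}
    (hA : ∀ i, ∑ j, |A i j| < 1) : 0 < (1 - A).det := by
  have hne (t : ℝ) (ht : t ∈ Set.Icc (0 : ℝ) 1) : (1 - t • A).det ≠ 0 := by
    refine det_ne_zero_of_sum_row_lt_diag fun k => ?_
    have hoff : ∑ j ∈ univ.erase k, ‖(1 - t • A) k j‖ = t * ∑ j ∈ univ.erase k, |A k j| := by
      rw [mul_sum]
      refine sum_congr rfl fun j hj => ?_
      simp [Matrix.one_apply_ne (ne_of_mem_erase hj).symm, abs_of_nonneg ht.1]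
    have hrow : t * ∑ j, |A k j| < 1 :=
      (mul_le_of_le_one_left (sum_nonneg fun j _ => abs_nonneg _) ht.2).trans_lt (hA k)
    rw [← sum_erase_add univ _ (mem_univ k)] at hrow
    have hdiag : 1 - t * |A k k| ≤ ‖(1 - t • A) k k‖ := by
      simp only [Matrix.sub_apply, Matrix.one_apply_eq, Matrix.smul_apply, smul_eq_mul]
      calc 1 - t * |A k k| = |1| - |t * A k k| := by rw [abs_one, abs_mul, abs_of_nonneg ht.1]
        _ ≤ |1 - t * A k k| := abs_sub_abs_le_abs_sub _ _
    rw [hoff]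
    linarith
  by_contra! hneg
  have hcont : ContinuousOn (fun t : ℝ => (1 - t • A).det) (Set.Icc 0 1) := by fun_prop
  obtain ⟨t, ht, hzero⟩ := intermediate_value_Icc' zero_le_one hcont
    (show (0 : ℝ) ∈ Set.Icc _ _ by simpa using hneg)
  exact hne t ht hzero

end RowSums

section NeumannSeries

attribute [local instance] Matrix.linftyOpNormedRing Matrix.linftyOpNormedAlgebra

lemma tsum_pow_eq_inv_one_sub {ι : Type*} [Fintype ι] [DecidableEq ι] {A : Matrix ι ι ℝ}
    (hA : ∀ i, ∑ j, |A i j| < 1) : ∑' k : ℕ, A ^ k = (1 - A)⁻¹ := by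
  have hnorm : ‖A‖ < 1 := by
    rw [Matrix.linfty_opNorm_def, ← NNReal.coe_one, NNReal.coe_lt_coe,
      Finset.sup_lt_iff zero_lt_one]
    intro i _
    rw [← NNReal.coe_lt_coe]
    simpa using hA i
  have : CompleteSpace (Matrix ι ι ℝ) := FiniteDimensional.complete ℝ _
  exact (Matrix.inv_eq_left_inv (geom_series_mul_neg A hnorm)).symm

end NeumannSeries

section Expansion

variable {γ ι κ R : Type*}

/-- The matrix `[[B, U(n^r)], [V(n^r), A(n^r, n^r)]]` obtained from `M = [[B, U], [V, A]]` by
repeating each index `i : ι` of the block `A` exactly `r i` times. -/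
def repeatIndices (M : Matrix (γ ⊕ ι) (γ ⊕ ι) R) (r : ι → ℕ) :
    Matrix (γ ⊕ Σ i, Fin (r i)) (γ ⊕ Σ i, Fin (r i)) R :=
  M.submatrix (Sum.map id Sigma.fst) (Sum.map id Sigma.fst)

/-- The equivalence separating the `k` copies of the last symbol `inr ()` from the other indices
of `repeatIndices`. -/
def splitLastSymbol (γ : Type*) (r : ι → ℕ) (k : ℕ) :
    (γ ⊕ Σ i, Fin (r i)) ⊕ Fin k ≃
      γ ⊕ Σ i, Fin (Sum.elim r (fun _ : Unit => k) i) :=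
  (sumAssoc _ _ _).trans <| sumCongr (Equiv.refl γ) <|
    (sumCongr (Equiv.refl _) (uniqueSigma fun _ : Unit => Fin k).symm).trans
      (sumSigmaDistrib fun i => Fin (Sum.elim r (fun _ : Unit => k) i)).symm

/-- The equivalence separating the exponent of the last symbol from the others. -/
def splitLastExponent (ι : Type*) : (ι → ℕ) × ℕ ≃ (ι ⊕ Unit → ℕ) where
  toFun p := Sum.elim p.1 fun _ => p.2
  invFun r := (r ∘ Sum.inl, r (Sum.inr ()))
  left_inv _ := rfl
  right_inv _ := funext <| Sum.rec (fun _ => rfl) fun _ => rfl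

lemma repeatIndices_submatrix_splitLastSymbol (M : Matrix (γ ⊕ (ι ⊕ Unit)) (γ ⊕ (ι ⊕ Unit)) R)
    (r : ι → ℕ) (k : ℕ) :
    (repeatIndices M (Sum.elim r fun _ => k)).submatrix (splitLastSymbol γ r k)
        (splitLastSymbol γ r k) =
      let N := M.submatrix (sumAssoc γ ι Unit) (sumAssoc γ ι Unit)
      constBorder (repeatIndices N.toBlocks₁₁ r)
        (fun x => N (Sum.inl (Sum.map id Sigma.fst x)) (Sum.inr ()))
        (fun x => N (Sum.inr ()) (Sum.inl (Sum.map id Sigma.fst x)))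
        (N (Sum.inr ()) (Sum.inr ())) k := by
  ext ((x | x) | x) ((y | y) | y) <;> rfl

variable [Fintype γ] [DecidableEq γ] [Fintype ι] [DecidableEq ι] [Fintype κ] [DecidableEq κ]

/-- The summand indexed by `r` in the submatrix MacMahon master theorem for
`M = [[B, U], [V, A]]`. -/
def masterTerm (β : ℝ) (M : Matrix (γ ⊕ ι) (γ ⊕ ι) ℝ) (r : ι → ℕ) : ℝ :=
  ((∏ i, (r i)! : ℕ) : ℝ)⁻¹ * permB β (repeatIndices M r)

/-- The right-hand side `permB β B̃ / det (1 - A) ^ β` of the submatrix MacMahon master theorem for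
`M = [[B, U], [V, A]]`. -/
def masterSum (β : ℝ) (M : Matrix (γ ⊕ ι) (γ ⊕ ι) ℝ) : ℝ :=
  permB β (eliminate M) * (1 - M.toBlocks₂₂).det ^ (-β)

lemma masterTerm_submatrix_equiv (β : ℝ) (M : Matrix (γ ⊕ ι) (γ ⊕ ι) ℝ) (e : κ ≃ ι)
    (r : ι → ℕ) :
    masterTerm β (M.submatrix (Sum.map id e) (Sum.map id e)) (r ∘ e) = masterTerm β M r := by
  rw [masterTerm, masterTerm, ← e.prod_comp fun i => (r i)!,
    ← permB_submatrix_equiv β (sumCongr (Equiv.refl γ) (e.sigmaCongrLeft (β := fun i => Fin (r i))))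
      (repeatIndices M r)]
  congr 2
  ext (x | x) (y | y) <;> rfl

lemma masterSum_submatrix_equiv (β : ℝ) (M : Matrix (γ ⊕ ι) (γ ⊕ ι) ℝ) (e : κ ≃ ι) :
    masterSum β (M.submatrix (Sum.map id e) (Sum.map id e)) = masterSum β M := by
  have hdet : (1 - (M.submatrix (Sum.map id e) (Sum.map id e)).toBlocks₂₂).det =
      (1 - M.toBlocks₂₂).det := by
    rw [← Matrix.det_submatrix_equiv_self e, Matrix.submatrix_sub, Pi.sub_apply, Pi.sub_apply,
      Matrix.submatrix_one_equiv]
    rfl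
  rw [masterSum, eliminate_submatrix, hdet, Matrix.submatrix_id_id, masterSum]

lemma hasSum_masterTerm_submatrix_equiv {β : ℝ} {M : Matrix (γ ⊕ ι) (γ ⊕ ι) ℝ} (e : κ ≃ ι)
    (h : HasSum (masterTerm β (M.submatrix (Sum.map id e) (Sum.map id e)))
      (masterSum β (M.submatrix (Sum.map id e) (Sum.map id e)))) :
    HasSum (masterTerm β M) (masterSum β M) := by
  rw [masterSum_submatrix_equiv, ← (e.symm.arrowCongr (Equiv.refl ℕ)).hasSum_iff] at h
  exact h.congr_fun fun r => (masterTerm_submatrix_equiv β M e r).symm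

lemma hasSum_masterTerm_of_isEmpty [IsEmpty ι] (β : ℝ) (M : Matrix (γ ⊕ ι) (γ ⊕ ι) ℝ) :
    HasSum (masterTerm β M) (masterSum β M) := by
  have hterm (r : ι → ℕ) : masterTerm β M r = masterSum β M := by
    have helim : eliminate M = (repeatIndices M r).submatrix
        (Equiv.sumEmpty γ _).symm (Equiv.sumEmpty γ _).symm := by
      ext i j
      simp [eliminate, Matrix.mul_apply, repeatIndices, Matrix.toBlocks₁₁]
    rw [masterSum, helim, permB_submatrix_equiv, masterTerm]
    simp
  rw [← hterm]
  exact hasSum_unique (masterTerm β M)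

lemma hasSum_masterTerm_last (β : ℝ) (M : Matrix (γ ⊕ (ι ⊕ Unit)) (γ ⊕ (ι ⊕ Unit)) ℝ)
    (ha : |M (Sum.inr (Sum.inr ())) (Sum.inr (Sum.inr ()))| < 1) (r : ι → ℕ) :
    HasSum (fun k : ℕ => (masterTerm β M ∘ splitLastExponent ι) (r, k))
      (masterTerm β (eliminateLast M) r *
        (1 - M (Sum.inr (Sum.inr ())) (Sum.inr (Sum.inr ()))) ^ (-β)) := by
  set N := M.submatrix (sumAssoc γ ι Unit) (sumAssoc γ ι Unit)
  set a := N (Sum.inr ()) (Sum.inr ())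
  set u := fun x : γ ⊕ Σ i, Fin (r i) => N (Sum.inl (Sum.map id Sigma.fst x)) (Sum.inr ())
  set v := fun x : γ ⊕ Σ i, Fin (r i) => N (Sum.inr ()) (Sum.inl (Sum.map id Sigma.fst x))
  have hterm (k : ℕ) : (masterTerm β M ∘ splitLastExponent ι) (r, k) =
      ((∏ i, (r i)! : ℕ) : ℝ)⁻¹ *
        ((k ! : ℝ)⁻¹ * permB β (constBorder (repeatIndices N.toBlocks₁₁ r) u v a k)) := by
    have hexp : splitLastExponent ι (r, k) = Sum.elim r fun _ => k := rfl
    rw [Function.comp_apply, hexp, masterTerm, ← permB_submatrix_equiv β (splitLastSymbol γ r k),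
      repeatIndices_submatrix_splitLastSymbol, Fintype.prod_sum_type, ← mul_assoc, ← mul_inv]
    simp [N, u, v, a]
  have hvalue : repeatIndices N.toBlocks₁₁ r + (1 - a)⁻¹ • Matrix.vecMulVec u v =
      repeatIndices (eliminateLast M) r := by
    ext x y
    exact (eliminate_unit_apply N _ _).symm
  simp_rw [hterm]
  rw [masterTerm, ← hvalue, mul_assoc]
  exact (hasSum_permB_constBorder β _ u v ha).mul_left _

end Expansion

section AbsoluteConvergence

lemma permB_nonneg {α : Type*} [Fintype α] [DecidableEq α] {β : ℝ} (hβ : 0 ≤ β)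
    {M : Matrix α α ℝ} (hM : ∀ i j, 0 ≤ M i j) : 0 ≤ permB β M :=
  sum_nonneg fun π _ => mul_nonneg (pow_nonneg hβ _) (prod_nonneg fun i _ => hM i (π i))

lemma abs_permB_le {α : Type*} [Fintype α] [DecidableEq α] (β : ℝ) (M : Matrix α α ℝ) :
    |permB β M| ≤ permB |β| (M.map abs) := by
  refine (abs_sum_le_sum_abs _ _).trans_eq (sum_congr rfl fun π _ => ?_)
  simp only [abs_mul, abs_pow, abs_prod, Matrix.map_apply]

variable {γ ι : Type*} [Fintype γ] [DecidableEq γ] [Fintype ι] [DecidableEq ι]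

lemma masterTerm_nonneg {β : ℝ} (hβ : 0 ≤ β) {M : Matrix (γ ⊕ ι) (γ ⊕ ι) ℝ}
    (hM : ∀ i j, 0 ≤ M i j) (r : ι → ℕ) : 0 ≤ masterTerm β M r :=
  mul_nonneg (by positivity) (permB_nonneg hβ fun _ _ => hM _ _)

lemma abs_masterTerm_le (β : ℝ) (M : Matrix (γ ⊕ ι) (γ ⊕ ι) ℝ) (r : ι → ℕ) :
    |masterTerm β M r| ≤ masterTerm |β| (M.map abs) r := by
  rw [masterTerm, abs_mul, abs_of_nonneg (by positivity)]
  exact mul_le_mul_of_nonneg_left (abs_permB_le β (repeatIndices M r)) (by positivity)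

end AbsoluteConvergence

section MasterTheorem

universe u

variable {γ ι : Type*} [Fintype γ] [DecidableEq γ] [Fintype ι] [DecidableEq ι]

lemma masterSum_eliminateLast_mul (β : ℝ) {M : Matrix (γ ⊕ (ι ⊕ Unit)) (γ ⊕ (ι ⊕ Unit)) ℝ}
    (hM : ∀ i, ∑ j, |M.toBlocks₂₂ i j| < 1) :
    masterSum β (eliminateLast M) *
        (1 - M (Sum.inr (Sum.inr ())) (Sum.inr (Sum.inr ()))) ^ (-β) = masterSum β M := by
  have hpivot : (1 - M.toBlocks₂₂.toBlocks₂₂).det =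
      1 - M (Sum.inr (Sum.inr ())) (Sum.inr (Sum.inr ())) := Matrix.det_unique _
  have hpos : 0 < 1 - M (Sum.inr (Sum.inr ())) (Sum.inr (Sum.inr ())) :=
    sub_pos.2 (lt_of_abs_lt (abs_apply_lt_one_of_row_sum_lt_one hM _ _))
  have hschur : 0 < (1 - eliminate M.toBlocks₂₂).det :=
    det_one_sub_pos (row_sum_eliminate_lt_one hM)
  have hunit : IsUnit (1 - M.toBlocks₂₂.toBlocks₂₂).det := by
    rw [hpivot]
    exact hpos.ne'.isUnit
  rw [masterSum, masterSum, eliminate_eliminateLast M hunit hschur.ne'.isUnit,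
    det_one_sub_eq_mul _ hunit, hpivot, Real.mul_rpow hpos.le hschur.le, mul_assoc,
    mul_comm ((1 - M _ _) ^ (-β))]
  rfl

lemma summable_masterTerm_of_nonneg {β : ℝ} (hβ : 0 ≤ β)
    {M : Matrix (γ ⊕ (ι ⊕ Unit)) (γ ⊕ (ι ⊕ Unit)) ℝ} (hM : ∀ i j, 0 ≤ M i j)
    (ha : |M (Sum.inr (Sum.inr ())) (Sum.inr (Sum.inr ()))| < 1)
    (h : Summable (masterTerm β (eliminateLast M))) :
    Summable (masterTerm β M) := by
  have hlast := hasSum_masterTerm_last β M ha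
  rw [← (splitLastExponent ι).summable_iff]
  refine (summable_prod_of_nonneg fun r => masterTerm_nonneg hβ hM _).2
    ⟨fun r => (hlast r).summable, ?_⟩
  exact (h.mul_right _).congr fun r => (hlast r).tsum_eq.symm

lemma hasSum_masterTerm_of_eliminateLast
    (ih : ∀ (β : ℝ) (N : Matrix (γ ⊕ ι) (γ ⊕ ι) ℝ), (∀ i, ∑ j, |N.toBlocks₂₂ i j| < 1) →
      HasSum (masterTerm β N) (masterSum β N))
    (β : ℝ) {M : Matrix (γ ⊕ (ι ⊕ Unit)) (γ ⊕ (ι ⊕ Unit)) ℝ}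
    (hM : ∀ i, ∑ j, |M.toBlocks₂₂ i j| < 1) :
    HasSum (masterTerm β M) (masterSum β M) := by
  have ih_eliminateLast (β : ℝ) {M : Matrix (γ ⊕ (ι ⊕ Unit)) (γ ⊕ (ι ⊕ Unit)) ℝ}
      (hM : ∀ i, ∑ j, |M.toBlocks₂₂ i j| < 1) :
      HasSum (masterTerm β (eliminateLast M)) (masterSum β (eliminateLast M)) :=
    ih β (eliminateLast M) (row_sum_eliminate_lt_one hM)
  have hsummable : Summable (masterTerm β M) := by
    have habs : ∀ i, ∑ j, |(M.map abs).toBlocks₂₂ i j| < 1 := by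
      simpa [Matrix.toBlocks₂₂] using hM
    exact .of_norm_bounded (summable_masterTerm_of_nonneg (abs_nonneg β) (fun _ _ => abs_nonneg _)
      (abs_apply_lt_one_of_row_sum_lt_one habs (Sum.inr ()) (Sum.inr ()))
      (ih_eliminateLast |β| habs).summable) (abs_masterTerm_le β M)
  have hiterated := ((splitLastExponent ι).hasSum_iff.2 hsummable.hasSum).prod_fiberwise
    (hasSum_masterTerm_last β M
      (abs_apply_lt_one_of_row_sum_lt_one hM (Sum.inr ()) (Sum.inr ())))
  have hvalue := (ih_eliminateLast β hM).mul_right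
    ((1 - M (Sum.inr (Sum.inr ())) (Sum.inr (Sum.inr ()))) ^ (-β))
  rw [← masterSum_eliminateLast_mul β hM, ← hiterated.unique hvalue]
  exact hsummable.hasSum

theorem hasSum_masterTerm {ι : Type u} [Fintype ι] [DecidableEq ι] (β : ℝ)
    (M : Matrix (γ ⊕ ι) (γ ⊕ ι) ℝ) (hM : ∀ i, ∑ j, |M.toBlocks₂₂ i j| < 1) :
    HasSum (masterTerm β M) (masterSum β M) := by
  revert β M
  refine Fintype.induction_empty_option (P := fun ι _ => ∀ [DecidableEq ι] (β : ℝ)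
    (M : Matrix (γ ⊕ ι) (γ ⊕ ι) ℝ), (∀ i, ∑ j, |M.toBlocks₂₂ i j| < 1) →
      HasSum (masterTerm β M) (masterSum β M)) ?_ ?_ ?_ ι
  · intro κ ι _ e ih _ β M hM
    let _ := Fintype.ofEquiv ι e.symm
    let _ := Classical.decEq κ
    exact hasSum_masterTerm_submatrix_equiv e <| ih β _ fun i =>
      (e.sum_comp fun j => |M.toBlocks₂₂ (e i) j|).trans_lt (hM (e i))
  · intro _ β M _
    exact hasSum_masterTerm_of_isEmpty β M
  · intro ι _ ih _ β M hM
    let e := (optionEquivSumPUnit ι).symm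
    let _ := Classical.decEq ι
    exact hasSum_masterTerm_submatrix_equiv e <| hasSum_masterTerm_of_eliminateLast ih β fun i =>
      (e.sum_comp fun j => |M.toBlocks₂₂ (e i) j|).trans_lt (hM (e i))

theorem submatrix_MMT_general (β : ℝ) (B : Matrix γ γ ℝ) (U : Matrix γ ι ℝ) (V : Matrix ι γ ℝ)
    {A : Matrix ι ι ℝ} (hA : ∀ i, ∑ j, |A i j| < 1) :
    HasSum (fun r : ι → ℕ => ((∏ i, (r i)! : ℕ) : ℝ)⁻¹ *
        permB β (repeatIndices (Matrix.fromBlocks B U V A) r))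
      (permB β (B + U * (∑' k : ℕ, A ^ k) * V) / (1 - A).det ^ β) := by
  rw [tsum_pow_eq_inv_one_sub hA, div_eq_mul_inv, ← Real.rpow_neg (det_one_sub_pos hA).le]
  exact hasSum_masterTerm β (Matrix.fromBlocks B U V A) hA

lemma repeatIndices_fromBlocks {n' n : ℕ} {R : Type*} (B : Matrix (Fin n') (Fin n') R)
    (U : Matrix (Fin n') (Fin n) R) (V : Matrix (Fin n) (Fin n') R) (A : Matrix (Fin n) (Fin n) R)
    (r : Fin n → ℕ) :
    repeatIndices (Matrix.fromBlocks B U V A) r =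
      Matrix.fromBlocks B (repU U r) (repV V r) (repA A r) := by
  ext (i | i) (j | j) <;> rfl

end MasterTheorem

/-- The Submatrix MacMahon Master Theorem:
`Σ_r (1/r!) perm_β [[B, U(n^r)],[V(n^r), A(n^r,n^r)]] = perm_β(B̃)/det(I-A)^β`,
with `B̃ = B + U (I-A)⁻¹ V` and `(I-A)⁻¹ = Σ_{k≥0} A^k`, for small `A`. -/
theorem submatrix_MMT (n' n : ℕ) (β : ℝ) :
    ∃ ε > (0 : ℝ), ∀ (B : Matrix (Fin n') (Fin n') ℝ) (U : Matrix (Fin n') (Fin n) ℝ)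
      (V : Matrix (Fin n) (Fin n') ℝ) (A : Matrix (Fin n) (Fin n) ℝ),
      (∀ i j, |A i j| < ε) →
      ∑' r : Fin n → ℕ, ((∏ i, (r i).factorial : ℕ) : ℝ)⁻¹ *
          permB β (Matrix.fromBlocks B (repU U r) (repV V r) (repA A r))
        = permB β (B + U * (∑' k : ℕ, A ^ k) * V) / Matrix.det (1 - A) ^ β := by
  refine ⟨1 / (n + 1), by positivity, fun B U V A hA => ?_⟩
  have hrow (i : Fin n) : ∑ j, |A i j| < 1 := calc
    ∑ j, |A i j| ≤ ∑ _j : Fin n, (1 / (n + 1) : ℝ) := sum_le_sum fun j _ => (hA i j).le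
    _ = n / (n + 1) := by simp [div_eq_mul_inv]
    _ < 1 := (div_lt_one (by positivity)).2 (lt_add_one _)
  simp only [← repeatIndices_fromBlocks]
  exact (submatrix_MMT_general β B U V hrow).tsum_eq
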